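/- arXiv:1707.05764 — 4 statements merged into one kernel-verified Lean document; each statement's English description precedes it below -/
import Mathlib

section
/- Let k : [0,2π] → ℝ be Lipschitz with Lipschitz constant L and k(0) = k(2π), and define K : S^1 → S^1 by K(e^{iθ}) = e^{i·k(θ)} for θ ∈ [0,2π]. Then K is Lipschitz with constant max{1, L}; that is, |K(x) − K(y)| ≤ max{1, L}·|x − y| for all x, y ∈ S^1. -/
/-!
The arc-length distance of unit vectors `x`, `y` is `angle x y`, and the chord between them has
length `2 sin (angle x y / 2)`. For `M ≥ 1`, `u ∈ [0, π/2]` and `v ∈ [0, π]`, concavity of the sine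
shows that `v ≤ M u` implies `sin v ≤ M sin u`, so an `L`-Lipschitz bound for arcs becomes a
`max 1 L`-Lipschitz bound for chords. For arcs the bound `L` is inherited from `k`: if the shorter
arc from `e^{is}` to `e^{it}` runs through `1`, split it there and use the triangle inequality for
angles.
-/

open Complex InnerProductGeometry Set
open scoped Real

theorem mul_apply_le_mul_apply_of_concaveOn {𝕜 : Type*} [Field 𝕜] [LinearOrder 𝕜]
    [IsStrictOrderedRing 𝕜] {S : Set 𝕜} {f : 𝕜 → 𝕜} (hf : ConcaveOn 𝕜 S f) {u v : 𝕜} (h0 : 0 ∈ S)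
    (hv : v ∈ S) (hf0 : 0 ≤ f 0) (hu : 0 ≤ u) (huv : u ≤ v) : u * f v ≤ v * f u := by
  rcases hu.eq_or_lt with rfl | hu
  · simpa using mul_nonneg huv hf0
  rcases huv.eq_or_lt with rfl | huv
  · rfl
  have secant := hf.neg.secant_mono_aux1 h0 hv hu huv
  simp only [Pi.neg_apply] at secant
  linarith [mul_nonneg (sub_nonneg.2 huv.le) hf0]

theorem sin_le_mul_sin {M u v : ℝ} (hM : 1 ≤ M) (hu : u ∈ Icc 0 (π / 2)) (hv : v ∈ Icc 0 π)
    (hvu : v ≤ M * u) : Real.sin v ≤ M * Real.sin u := by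
  have hsin : 0 ≤ Real.sin u :=
    Real.sin_nonneg_of_nonneg_of_le_pi hu.1 (by linarith [hu.2, Real.pi_pos])
  rcases hu.1.eq_or_lt with rfl | hu_pos
  · have : v = 0 := le_antisymm (by simpa using hvu) hv.1
    simp [this]
  rcases le_total v u with h | h
  · calc
      Real.sin v ≤ Real.sin u :=
        Real.sin_le_sin_of_le_of_le_pi_div_two (by linarith [hv.1, Real.pi_pos]) hu.2 h
      _ ≤ M * Real.sin u := le_mul_of_one_le_left hsin hM
  · refine le_of_mul_le_mul_left ?_ hu_pos
    calc
      u * Real.sin v ≤ v * Real.sin u :=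
        mul_apply_le_mul_apply_of_concaveOn strictConcaveOn_sin_Icc.concaveOn
          (left_mem_Icc.2 Real.pi_pos.le) hv Real.sin_zero.ge hu.1 h
      _ ≤ M * u * Real.sin u := by gcongr
      _ = u * (M * Real.sin u) := by ring

section Chord

variable {E F : Type*} [NormedAddCommGroup E] [InnerProductSpace ℝ E]
  [NormedAddCommGroup F] [InnerProductSpace ℝ F]

theorem norm_sub_eq_two_mul_sin_half_angle {x y : E} (hx : ‖x‖ = 1) (hy : ‖y‖ = 1) :
    ‖x - y‖ = 2 * Real.sin (angle x y / 2) := by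
  have hsin : 0 ≤ Real.sin (angle x y / 2) :=
    Real.sin_nonneg_of_nonneg_of_le_pi (by linarith [angle_nonneg x y])
      (by linarith [angle_le_pi x y, Real.pi_pos])
  rw [← sq_eq_sq₀ (norm_nonneg _) (by positivity), mul_pow, Real.sin_sq_eq_half_sub,
    mul_div_cancel₀ _ two_ne_zero, norm_sub_sq_real, hx, hy,
    inner_eq_cos_angle_of_norm_eq_one hx hy]
  ring

theorem norm_sub_le_max_mul_norm_sub {L : ℝ} {x y : E} {x' y' : F} (hx : ‖x‖ = 1) (hy : ‖y‖ = 1)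
    (hx' : ‖x'‖ = 1) (hy' : ‖y'‖ = 1) (h : angle x' y' ≤ L * angle x y) :
    ‖x' - y'‖ ≤ max 1 L * ‖x - y‖ := by
  have hmax : angle x' y' ≤ max 1 L * angle x y :=
    h.trans (mul_le_mul_of_nonneg_right (le_max_right 1 L) (angle_nonneg x y))
  have hsin : Real.sin (angle x' y' / 2) ≤ max 1 L * Real.sin (angle x y / 2) :=
    sin_le_mul_sin (le_max_left 1 L)
      ⟨by linarith [angle_nonneg x y], by linarith [angle_le_pi x y]⟩
      ⟨by linarith [angle_nonneg x' y'], by linarith [angle_le_pi x' y', Real.pi_pos]⟩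
      (by linarith)
  rw [norm_sub_eq_two_mul_sin_half_angle hx hy, norm_sub_eq_two_mul_sin_half_angle hx' hy']
  linarith

end Chord

theorem angle_exp_exp_eq_arccos (s t : ℝ) :
    angle (exp (s * I)) (exp (t * I)) = Real.arccos (Real.cos (s - t)) := by
  rw [angle, norm_exp_ofReal_mul_I, norm_exp_ofReal_mul_I, one_mul, div_one, Complex.inner,
    ← exp_conj, ← exp_add, map_mul, conj_ofReal, conj_I, ← neg_sub t s, Real.cos_neg,
    ← exp_ofReal_mul_I_re]
  push_cast
  ring_nf

theorem angle_exp_exp_of_abs_sub_le_pi {s t : ℝ} (h : |s - t| ≤ π) :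
    angle (exp (s * I)) (exp (t * I)) = |s - t| := by
  rw [angle_exp_exp_eq_arccos, ← Real.cos_abs, Real.arccos_cos (abs_nonneg _) h]

theorem angle_exp_exp_of_pi_le_abs_sub {s t : ℝ} (h : π ≤ |s - t|) (h' : |s - t| ≤ 2 * π) :
    angle (exp (s * I)) (exp (t * I)) = 2 * π - |s - t| := by
  rw [angle_exp_exp_eq_arccos, ← Real.cos_abs, ← Real.cos_two_pi_sub,
    Real.arccos_cos (by linarith) (by linarith)]

theorem angle_exp_exp_le_abs_sub (s t : ℝ) :
    angle (exp (s * I)) (exp (t * I)) ≤ |s - t| := by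
  rcases le_total |s - t| π with h | h
  · exact (angle_exp_exp_of_abs_sub_le_pi h).le
  · exact (angle_le_pi _ _).trans h

theorem exists_mem_Icc_exp_mul_I_eq {x : ℂ} (hx : ‖x‖ = 1) :
    ∃ θ ∈ Icc 0 (2 * π), exp ((θ : ℝ) * I) = x := by
  obtain ⟨φ, -, rfl⟩ := norm_eq_one_iff'.1 hx
  have hperiodic : Function.Periodic (fun θ : ℝ ↦ exp (θ * I)) (2 * π) := fun θ ↦ by
    simpa using exp_mul_I_periodic θ
  obtain ⟨θ, hθ, h⟩ := hperiodic.exists_mem_Ico₀ Real.two_pi_pos φ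
  exact ⟨θ, Ico_subset_Icc_self hθ, h.symm⟩

theorem angle_le_mul_angle_of_forall_exp {E : Type*} [NormedAddCommGroup E]
    [InnerProductSpace ℝ E] {L : ℝ} {K : ℂ → E}
    (hK : ∀ s ∈ Icc 0 (2 * π), ∀ t ∈ Icc 0 (2 * π),
      angle (K (exp (s * I))) (K (exp (t * I))) ≤ L * |s - t|)
    {x y : ℂ} (hx : ‖x‖ = 1) (hy : ‖y‖ = 1) : angle (K x) (K y) ≤ L * angle x y := by
  obtain ⟨s, hs, rfl⟩ := exists_mem_Icc_exp_mul_I_eq hx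
  obtain ⟨t, ht, rfl⟩ := exists_mem_Icc_exp_mul_I_eq hy
  wlog hst : s ≤ t generalizing s t
  · rw [angle_comm, angle_comm (exp (s * I))]
    exact this t ht hy s hs hx (le_of_not_ge hst)
  rcases le_total |s - t| π with h | h
  · rw [angle_exp_exp_of_abs_sub_le_pi h]
    exact hK s hs t ht
  have habs : |s - t| = t - s := by rw [abs_sub_comm, abs_of_nonneg (sub_nonneg.2 hst)]
  have to_one : angle (K (exp (s * I))) (K 1) ≤ L * s := by
    simpa [abs_of_nonneg hs.1] using hK s hs 0 (left_mem_Icc.2 Real.two_pi_pos.le)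
  have from_one : angle (K 1) (K (exp (t * I))) ≤ L * (2 * π - t) := by
    simpa [abs_of_nonneg (sub_nonneg.2 ht.2)] using
      hK (2 * π) (right_mem_Icc.2 Real.two_pi_pos.le) t ht
  rw [angle_exp_exp_of_pi_le_abs_sub h (by linarith [hs.1, ht.2]), habs]
  calc
    angle (K (exp (s * I))) (K (exp (t * I)))
        ≤ angle (K (exp (s * I))) (K 1) + angle (K 1) (K (exp (t * I))) :=
      angle_le_angle_add_angle _ _ _
    _ ≤ L * s + L * (2 * π - t) := add_le_add to_one from_one
    _ = L * (2 * π - (t - s)) := by ring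

theorem circle_map_lipschitz_general {L : ℝ} {k : ℝ → ℝ}
    (hk : ∀ s ∈ Icc 0 (2 * π), ∀ t ∈ Icc 0 (2 * π), |k s - k t| ≤ L * |s - t|)
    {K : ℂ → ℂ} (hK : ∀ θ ∈ Icc 0 (2 * π), K (exp (θ * I)) = exp (k θ * I))
    {x y : ℂ} (hx : ‖x‖ = 1) (hy : ‖y‖ = 1) : ‖K x - K y‖ ≤ max 1 L * ‖x - y‖ := by
  have norm_K {z : ℂ} (hz : ‖z‖ = 1) : ‖K z‖ = 1 := by
    obtain ⟨θ, hθ, rfl⟩ := exists_mem_Icc_exp_mul_I_eq hz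
    rw [hK θ hθ, norm_exp_ofReal_mul_I]
  refine norm_sub_le_max_mul_norm_sub hx hy (norm_K hx) (norm_K hy)
    (angle_le_mul_angle_of_forall_exp (fun s hs t ht ↦ ?_) hx hy)
  rw [hK s hs, hK t ht]
  exact (angle_exp_exp_le_abs_sub (k s) (k t)).trans (hk s hs t ht)

/-- **Lemma 2.3.** Let `k : [0, 2π] → ℝ` be Lipschitz with constant `L` and
`k(0) = k(2π)`, and define `K : S¹ → S¹` by `K(e^{iθ}) = e^{i k(θ)}`. Then `K`
is Lipschitz (for the chordal distance) with constant `max{1, L}`. -/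
theorem circle_map_lipschitz (L : ℝ) (hL : 0 ≤ L) (k : ℝ → ℝ)
    (hk : ∀ s ∈ Set.Icc 0 (2 * Real.pi), ∀ t ∈ Set.Icc 0 (2 * Real.pi),
      |k s - k t| ≤ L * |s - t|)
    (hper : k 0 = k (2 * Real.pi))
    (K : ℂ → ℂ)
    (hK : ∀ θ ∈ Set.Icc 0 (2 * Real.pi),
      K (Complex.exp (θ * Complex.I)) = Complex.exp ((k θ : ℂ) * Complex.I)) :
    ∀ x y : ℂ, ‖x‖ = 1 → ‖y‖ = 1 → ‖K x - K y‖ ≤ max 1 L * ‖x - y‖ :=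
  fun _ _ ↦ circle_map_lipschitz_general hk hK
end

section
/- For every a ≥ 0 there exists a constant κ_a > 0 such that for every measurable subset A ⊆ S^1, ∬_{A×A} |x − y|^a dσ(x) dσ(y) ≥ κ_a·σ(A)^{a+2}. -/
open MeasureTheory
open scoped ENNReal

noncomputable section

/-- Arc-length measure on the unit circle, realized as a measure on ℂ:
the pushforward of Lebesgue measure on `[0, 2π)` under `θ ↦ exp (θ i)`. -/
def circleMeasure : Measure ℂ :=
  Measure.map (fun θ : ℝ => Complex.exp (θ * Complex.I))
    (volume.restrict (Set.Ico 0 (2 * Real.pi)))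

/-- The unit circle `S¹ ⊆ ℂ`. -/
def unitCircle : Set ℂ := Metric.sphere (0 : ℂ) 1

end

/-!
Suppose balls of radius `r` have measure at most `C * r ^ d`, and take `r` such that this bound is
half of the measure of `A`. For each `x ∈ A`, at least half of `A` is then at distance at least `r`
from `x`, so the integral over `y` is at least `r ^ a` times half of the measure of `A`, while `r`
is comparable to the `d`-th root of the measure of `A`. On the circle `d = 1`, because the shorter
arc between two points is at most `π / 2` times as long as its chord.
-/

open scoped NNReal Real

section Energy

variable {X : Type*} [MeasurableSpace X] {μ : Measure X} {s : Set X}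

lemma half_measure_le_measure_diff {t : Set X} (hs : μ s ≠ ∞) (ht : μ t ≤ μ s / 2) :
    μ s / 2 ≤ μ (s \ t) :=
  calc
    μ s / 2 = μ s - μ s / 2 := (ENNReal.sub_half hs).symm
    _ ≤ μ s - μ t := tsub_le_tsub_left ht _
    _ ≤ μ (s \ t) := le_measure_sdiff

variable [PseudoEMetricSpace X] [OpensMeasurableSpace X] {a d : ℝ} {C : ℝ≥0}

lemma rpow_mul_measure_diff_eball_le_setLIntegral_edist_rpow (ha : 0 ≤ a) (x : X) (r : ℝ≥0∞) :
    r ^ a * μ (s \ Metric.eball x r) ≤ ∫⁻ y in s, edist x y ^ a ∂μ := by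
  have hsubset : s \ Metric.eball x r ⊆ {y | r ^ a ≤ edist x y ^ a} ∩ s := fun y hy =>
    ⟨ENNReal.rpow_le_rpow (not_lt.1 fun h => hy.2 (Metric.mem_eball'.2 h)) ha, hy.1⟩
  calc
    r ^ a * μ (s \ Metric.eball x r)
        ≤ r ^ a * μ.restrict s {y | r ^ a ≤ edist x y ^ a} := by
      gcongr r ^ a * ?_
      exact (measure_mono hsubset).trans (Measure.le_restrict_apply _ _)
    _ ≤ ∫⁻ y in s, edist x y ^ a ∂μ :=
      mul_meas_ge_le_lintegral (measurable_edist_right.pow_const a) _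

lemma rpow_mul_half_measure_le_setLIntegral_edist_rpow {x : X} (ha : 0 ≤ a) (hd : 0 < d)
    (hC : C ≠ 0) (hs : μ s ≠ ∞) (hball : ∀ r, μ (Metric.eball x r) ≤ C * r ^ d) :
    (μ s / (2 * C)) ^ (a / d) * (μ s / 2) ≤ ∫⁻ y in s, edist x y ^ a ∂μ := by
  set r : ℝ≥0∞ := (μ s / (2 * C)) ^ d⁻¹ with hr
  have hCr : C * r ^ d = μ s / 2 := by
    rw [hr, ENNReal.rpow_inv_rpow hd.ne', mul_comm (2 : ℝ≥0∞), ← mul_div_assoc,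
      ENNReal.mul_div_mul_left _ _ (ENNReal.coe_ne_zero.2 hC) ENNReal.coe_ne_top]
  have hra : r ^ a = (μ s / (2 * C)) ^ (a / d) := by
    rw [hr, ← ENNReal.rpow_mul, inv_mul_eq_div]
  calc
    (μ s / (2 * C)) ^ (a / d) * (μ s / 2) ≤ r ^ a * μ (s \ Metric.eball x r) := by
      rw [hra]
      gcongr
      exact half_measure_le_measure_diff hs ((hball r).trans_eq hCr)
    _ ≤ ∫⁻ y in s, edist x y ^ a ∂μ :=
      rpow_mul_measure_diff_eball_le_setLIntegral_edist_rpow ha x r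

theorem mul_measure_rpow_le_setLIntegral_setLIntegral_edist_rpow (ha : 0 ≤ a) (hd : 0 < d)
    (hC : C ≠ 0) (hs : MeasurableSet s) (hμs : μ s ≠ ∞)
    (hball : ∀ x ∈ s, ∀ r, μ (Metric.eball x r) ≤ C * r ^ d) :
    ((2 * C)⁻¹ ^ (a / d) / 2 : ℝ≥0) * μ s ^ (a / d + 2) ≤
      ∫⁻ x in s, ∫⁻ y in s, edist x y ^ a ∂μ ∂μ :=
  have had : 0 ≤ a / d := div_nonneg ha hd.le
  calc
    ((2 * C)⁻¹ ^ (a / d) / 2 : ℝ≥0) * μ s ^ (a / d + 2)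
        = (μ s / (2 * C)) ^ (a / d) * (μ s / 2) * μ s := by
      rw [ENNReal.coe_div two_ne_zero, ENNReal.coe_rpow_of_nonneg _ had,
        ENNReal.coe_inv (mul_ne_zero two_ne_zero hC), ENNReal.coe_mul, ENNReal.coe_ofNat,
        ENNReal.rpow_add_of_nonneg _ _ had zero_le_two, ENNReal.rpow_two,
        div_eq_mul_inv (μ s) (2 * C), ENNReal.mul_rpow_of_nonneg _ _ had]
      simp only [div_eq_mul_inv]
      ring
    _ = ∫⁻ _ in s, (μ s / (2 * C)) ^ (a / d) * (μ s / 2) ∂μ := (setLIntegral_const _ _).symm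
    _ ≤ ∫⁻ x in s, ∫⁻ y in s, edist x y ^ a ∂μ ∂μ :=
      setLIntegral_mono' hs fun x hx =>
        rpow_mul_half_measure_le_setLIntegral_edist_rpow ha hd hC hμs (hball x hx)

end Energy

section Chord

variable {T : ℝ}

lemma measurable_coe_toCircle : Measurable fun t : AddCircle T => (t.toCircle : ℂ) :=
  (continuous_subtype_val.comp AddCircle.continuous_toCircle).measurable

variable [hT : Fact (0 < T)]

lemma norm_le_mul_norm_toCircle_sub_one (t : AddCircle T) :
    ‖t‖ ≤ T / 4 * ‖(t.toCircle : ℂ) - 1‖ := by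
  have hT0 : 0 < T := hT.out
  obtain ⟨x, hx, rfl⟩ : t ∈ ((↑) : ℝ → AddCircle T) '' Set.Ioc (-(T / 2)) (-(T / 2) + T) := by
    rw [AddCircle.coe_image_Ioc_eq]
    trivial
  have hxT : |x| ≤ T / 2 := abs_le.2 ⟨hx.1.le, by linarith [hx.2]⟩
  have habs : |2 * π / T * x / 2| = π / T * |x| := by
    rw [show 2 * π / T * x / 2 = π / T * x by ring, abs_mul, abs_of_pos (by positivity)]
  have hjordan : 2 / π * (π / T * |x|) ≤ |Real.sin (2 * π / T * x / 2)| := by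
    rw [← habs]
    refine Real.mul_abs_le_abs_sin ?_
    calc |2 * π / T * x / 2| = π / T * |x| := habs
      _ ≤ π / T * (T / 2) := by gcongr
      _ = π / 2 := by field
  calc
    ‖(x : AddCircle T)‖ ≤ |x| := QuotientAddGroup.norm_mk_le_norm
    _ = T / 4 * (2 * (2 / π * (π / T * |x|))) := by field
    _ ≤ T / 4 * (2 * |Real.sin (2 * π / T * x / 2)|) := by gcongr
    _ = T / 4 * ‖(AddCircle.toCircle (x : AddCircle T) : ℂ) - 1‖ := by
      rw [AddCircle.toCircle_apply_mk, Circle.coe_exp, mul_comm _ Complex.I,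
        Complex.norm_exp_I_mul_ofReal_sub_one, norm_mul, Real.norm_two, Real.norm_eq_abs]

lemma dist_le_mul_dist_toCircle (t u : AddCircle T) :
    dist t u ≤ T / 4 * dist (t.toCircle : ℂ) u.toCircle := by
  have hrot : (t.toCircle : ℂ) - u.toCircle = ((t - u).toCircle - 1) * u.toCircle := by
    rw [sub_mul, one_mul, ← Circle.coe_mul, ← AddCircle.toCircle_add, sub_add_cancel]
  rw [dist_eq_norm, dist_eq_norm, hrot, norm_mul, Circle.norm_coe, mul_one]
  exact norm_le_mul_norm_toCircle_sub_one (t - u)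

lemma volume_toCircle_preimage_ball_le (t : AddCircle T) (r : ℝ) :
    volume ((fun u : AddCircle T => (u.toCircle : ℂ)) ⁻¹' Metric.ball (t.toCircle : ℂ) r) ≤
      ENNReal.ofReal (T / 2 * r) := by
  have hT0 : 0 < T := hT.out
  have hsubset : (fun u : AddCircle T => (u.toCircle : ℂ)) ⁻¹' Metric.ball (t.toCircle : ℂ) r ⊆
      Metric.closedBall t (T / 4 * r) := by
    intro u hu
    rw [Set.mem_preimage, Metric.mem_ball] at hu
    rw [Metric.mem_closedBall]
    calc
      dist u t ≤ T / 4 * dist (u.toCircle : ℂ) t.toCircle := dist_le_mul_dist_toCircle u t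
      _ ≤ T / 4 * r := by gcongr
  calc
    _ ≤ volume (Metric.closedBall t (T / 4 * r)) := measure_mono hsubset
    _ = ENNReal.ofReal (min T (2 * (T / 4 * r))) := AddCircle.volume_closedBall T _
    _ ≤ ENNReal.ofReal (T / 2 * r) :=
      ENNReal.ofReal_le_ofReal ((min_le_right _ _).trans_eq (by ring))

end Chord

section CircleMeasure

local instance fact_two_pi_pos : Fact (0 < 2 * π) := ⟨Real.two_pi_pos⟩

instance isFiniteMeasure_circleMeasure : IsFiniteMeasure circleMeasure := by
  unfold circleMeasure
  infer_instance

lemma circleMeasure_eq_map_toCircle :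
    circleMeasure = volume.map fun t : AddCircle (2 * π) => (t.toCircle : ℂ) := by
  have hcoe : MeasurePreserving ((↑) : ℝ → AddCircle (2 * π))
      (volume.restrict (Set.Ico 0 (2 * π))) := by
    rw [restrict_Ico_eq_restrict_Ioc]
    simpa only [zero_add] using AddCircle.measurePreserving_mk (2 * π) 0
  rw [circleMeasure, ← hcoe.map_eq, Measure.map_map measurable_coe_toCircle hcoe.measurable]
  congr 1 with θ
  simp [AddCircle.toCircle_apply_mk]

lemma exists_toCircle_eq_of_mem_unitCircle {x : ℂ} (hx : x ∈ unitCircle) :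
    ∃ t : AddCircle (2 * π), (t.toCircle : ℂ) = x := by
  obtain ⟨t, ht⟩ := (AddCircle.homeomorphCircle Real.two_pi_pos.ne').surjective ⟨x, hx⟩
  exact ⟨t, by rw [← AddCircle.homeomorphCircle_apply Real.two_pi_pos.ne', ht]⟩

lemma circleMeasure_eball_le {x : ℂ} (hx : x ∈ unitCircle) (r : ℝ≥0∞) :
    circleMeasure (Metric.eball x r) ≤ NNReal.pi * r := by
  obtain rfl | hr := eq_or_ne r ∞
  · simp [NNReal.pi_ne_zero]
  lift r to ℝ≥0 using hr
  obtain ⟨t, rfl⟩ := exists_toCircle_eq_of_mem_unitCircle hx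
  rw [Metric.eball_coe, circleMeasure_eq_map_toCircle,
    Measure.map_apply measurable_coe_toCircle measurableSet_ball]
  refine (volume_toCircle_preimage_ball_le t r).trans_eq ?_
  rw [mul_div_cancel_left₀ _ two_ne_zero, ENNReal.ofReal_mul Real.pi_nonneg,
    ENNReal.ofReal_coe_nnreal, ← NNReal.coe_real_pi, ENNReal.ofReal_coe_nnreal]

end CircleMeasure

/-- For every `a ≥ 0` there is `κ_a > 0` such that
`∬_{A×A} |x - y|^a dσ(x) dσ(y) ≥ κ_a σ(A)^{a+2}` for every measurable `A ⊆ S¹`. -/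
theorem double_integral_lower_bound_circle (a : ℝ) (ha : 0 ≤ a) :
    ∃ κ : ℝ, 0 < κ ∧
      ∀ A : Set ℂ, A ⊆ unitCircle → MeasurableSet A →
        ENNReal.ofReal (κ * (circleMeasure A).toReal ^ (a + 2)) ≤
          ∫⁻ q in A ×ˢ A, ENNReal.ofReal (‖q.1 - q.2‖ ^ a)
            ∂(circleMeasure.prod circleMeasure) := by
  have hedist (q : ℂ × ℂ) : ENNReal.ofReal (‖q.1 - q.2‖ ^ a) = edist q.1 q.2 ^ a := by
    rw [edist_dist, dist_eq_norm, ENNReal.ofReal_rpow_of_nonneg (norm_nonneg _) ha]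
  let κ : ℝ≥0 := (2 * NNReal.pi)⁻¹ ^ a / 2
  have hκ : 0 < κ := by positivity [NNReal.pi_pos]
  refine ⟨κ, NNReal.coe_pos.2 hκ, fun A hA hAm => ?_⟩
  calc
    ENNReal.ofReal (κ * (circleMeasure A).toReal ^ (a + 2)) = κ * circleMeasure A ^ (a + 2) := by
      rw [ENNReal.ofReal_mul κ.coe_nonneg, ENNReal.ofReal_coe_nnreal,
        ← ENNReal.ofReal_rpow_of_nonneg ENNReal.toReal_nonneg (by positivity),
        ENNReal.ofReal_toReal (measure_ne_top _ _)]
    _ ≤ ∫⁻ x in A, ∫⁻ y in A, edist x y ^ a ∂circleMeasure ∂circleMeasure := by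
      simpa only [div_one] using mul_measure_rpow_le_setLIntegral_setLIntegral_edist_rpow
        ha one_pos NNReal.pi_ne_zero hAm (measure_ne_top _ _) fun x hx r => by
          simpa only [ENNReal.rpow_one] using circleMeasure_eball_le (hA hx) r
    _ = ∫⁻ q in A ×ˢ A, ENNReal.ofReal (‖q.1 - q.2‖ ^ a) ∂(circleMeasure.prod circleMeasure) := by
      simp only [hedist]
      rw [← Measure.prod_restrict, lintegral_prod _ (by fun_prop)]
end

section
/- For every a ≥ 0 there exists a constant c_a > 0 such that for every Lebesgue-measurable subset A ⊆ ℝ of finite measure, ∬_{A×A} |x − y|^a dx dy ≥ c_a·|A|^{a+2}, where |A| denotes the Lebesgue measure of A. -/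
open MeasureTheory
open scoped ENNReal

/-!
Fix a set `s` of finite measure `M` in a space whose balls of radius `r` have measure at most
`C * r ^ d`. For `r = (M / 2C) ^ (1 / d)`, every ball of radius `r` misses at least half of `s`, so
each point of `s` is at distance at least `r` from a portion of `s` of measure `M / 2`. The double
integral is therefore at least `r ^ a * (M / 2) * M`, which is a constant times `M ^ (a / d + 2)`.
On the line, `d = 1` and `C = 2`.
-/

open scoped NNReal

section LowerBounds

variable {X : Type*} [PseudoEMetricSpace X] [MeasurableSpace X] [OpensMeasurableSpace X]
  {μ : Measure X} {a d : ℝ} {C : ℝ≥0}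

theorem rpow_mul_measure_sub_eball_le_setLIntegral_edist_rpow (ha : 0 ≤ a) (s : Set X) (x : X)
    (r : ℝ≥0∞) :
    r ^ a * (μ s - μ (Metric.eball x r)) ≤ ∫⁻ y in s, edist x y ^ a ∂μ := by
  have far_subset : s \ Metric.eball x r ⊆ {y | r ^ a ≤ edist x y ^ a} ∩ s := by
    rintro y ⟨hys, hyr⟩
    rw [Metric.mem_eball', not_lt] at hyr
    exact ⟨ENNReal.rpow_le_rpow hyr ha, hys⟩
  calc r ^ a * (μ s - μ (Metric.eball x r))
      ≤ r ^ a * μ.restrict s {y | r ^ a ≤ edist x y ^ a} := by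
        gcongr
        calc μ s - μ (Metric.eball x r) ≤ μ (s \ Metric.eball x r) := le_measure_sdiff
          _ ≤ μ ({y | r ^ a ≤ edist x y ^ a} ∩ s) := measure_mono far_subset
          _ ≤ μ.restrict s {y | r ^ a ≤ edist x y ^ a} := Measure.le_restrict_apply ..
    _ ≤ ∫⁻ y in s, edist x y ^ a ∂μ :=
        mul_meas_ge_le_lintegral (measurable_edist_right.pow_const a) (r ^ a)

variable [SecondCountableTopology X] [SFinite μ]

theorem rpow_mul_measure_sub_mul_measure_le_setLIntegral_edist_rpow (ha : 0 ≤ a) {r m : ℝ≥0∞}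
    (hball : ∀ x, μ (Metric.eball x r) ≤ m) (s : Set X) :
    r ^ a * (μ s - m) * μ s ≤ ∫⁻ q in s ×ˢ s, edist q.1 q.2 ^ a ∂(μ.prod μ) := by
  rw [setLIntegral_prod _ (measurable_edist.pow_const a).aemeasurable, ← setLIntegral_const]
  refine lintegral_mono fun x => le_trans ?_
    (rpow_mul_measure_sub_eball_le_setLIntegral_edist_rpow ha s x r)
  gcongr
  exact hball x

theorem div_rpow_mul_sq_div_two_le_setLIntegral_edist_rpow (ha : 0 ≤ a) (hd : 0 < d)
    (hball : ∀ x r, μ (Metric.eball x r) ≤ C * r ^ d) (s : Set X) :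
    (μ s / (2 * C)) ^ (a / d) * (μ s ^ 2 / 2) ≤
      ∫⁻ q in s ×ˢ s, edist q.1 q.2 ^ a ∂(μ.prod μ) := by
  have lower_bound (r : ℝ≥0∞) :=
    rpow_mul_measure_sub_mul_measure_le_setLIntegral_edist_rpow ha (hball · r) s
  rcases eq_or_ne (μ s) ∞ with hs | hs
  · have integral_eq_top := lower_bound 1
    simp only [hs, ENNReal.one_rpow, mul_one, one_mul, ENNReal.top_sub_coe, ENNReal.top_mul_top,
      top_le_iff] at integral_eq_top
    exact integral_eq_top ▸ le_top
  set r := (μ s / (2 * C)) ^ d⁻¹ with hr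
  have half_le : μ s / 2 ≤ μ s - C * r ^ d := by
    have ball_le : C * r ^ d ≤ μ s / 2 := by
      rw [hr, ENNReal.rpow_inv_rpow hd.ne', ENNReal.le_div_iff_mul_le (by simp) (by simp),
        mul_right_comm, mul_comm (C : ℝ≥0∞) 2]
      exact ENNReal.mul_div_le
    calc μ s / 2 = μ s - μ s / 2 := (ENNReal.sub_half hs).symm
      _ ≤ μ s - C * r ^ d := tsub_le_tsub_left ball_le _
  calc (μ s / (2 * C)) ^ (a / d) * (μ s ^ 2 / 2)
      = r ^ a * (μ s / 2) * μ s := by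
        rw [hr, ← ENNReal.rpow_mul, inv_mul_eq_div]
        simp only [div_eq_mul_inv]
        ring
    _ ≤ r ^ a * (μ s - C * r ^ d) * μ s := by gcongr
    _ ≤ _ := lower_bound r

theorem double_integral_lower_bound_real_general (ha : 0 ≤ a) (hd : 0 < d)
    (hball : ∀ x r, μ (Metric.eball x r) ≤ C * r ^ d) :
    ∃ c : ℝ≥0, 0 < c ∧ ∀ s : Set X,
      c * μ s ^ (a / d + 2) ≤ ∫⁻ q in s ×ˢ s, edist q.1 q.2 ^ a ∂(μ.prod μ) := by
  -- With `C` itself, the constant below would be `0⁻¹ = 0` when `C = 0 < a`.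
  have hball' (x r) : μ (Metric.eball x r) ≤ (C + 1 : ℝ≥0) * r ^ d :=
    (hball x r).trans (by gcongr; exact le_self_add)
  have had : 0 ≤ a / d := by positivity
  refine ⟨((2 * (C + 1)) ^ (a / d))⁻¹ / 2, by positivity, fun s => ?_⟩
  refine le_of_eq_of_le ?_ (div_rpow_mul_sq_div_two_le_setLIntegral_edist_rpow ha hd hball' s)
  rw [ENNReal.rpow_add_of_nonneg _ _ had zero_le_two, ENNReal.rpow_two,
    ENNReal.div_rpow_of_nonneg _ _ had, ENNReal.coe_div two_ne_zero,
    ENNReal.coe_inv (by positivity), ENNReal.coe_rpow_of_nonneg _ had]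
  push_cast
  simp only [div_eq_mul_inv]
  ring

end LowerBounds

theorem ofReal_abs_sub_rpow {a : ℝ} (ha : 0 ≤ a) (x y : ℝ) :
    ENNReal.ofReal (|x - y| ^ a) = edist x y ^ a := by
  rw [edist_dist, Real.dist_eq, ENNReal.ofReal_rpow_of_nonneg (abs_nonneg _) ha]

theorem ofReal_coe_mul_toReal_rpow {p : ℝ} (hp : 0 ≤ p) (c : ℝ≥0) {M : ℝ≥0∞} (hM : M ≠ ∞) :
    ENNReal.ofReal (c * M.toReal ^ p) = c * M ^ p := by
  rw [ENNReal.ofReal_mul c.coe_nonneg, ENNReal.ofReal_coe_nnreal, ENNReal.toReal_rpow,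
    ENNReal.ofReal_toReal (ENNReal.rpow_ne_top_of_nonneg hp hM)]

/-- For every `a ≥ 0` there is `c_a > 0` such that
`∬_{A×A} |x - y|^a dx dy ≥ c_a |A|^{a+2}` for every measurable `A ⊆ ℝ` of finite
Lebesgue measure. -/
theorem double_integral_lower_bound_real (a : ℝ) (ha : 0 ≤ a) :
    ∃ c : ℝ, 0 < c ∧
      ∀ A : Set ℝ, MeasurableSet A → volume A ≠ ⊤ →
        ENNReal.ofReal (c * (volume A).toReal ^ (a + 2)) ≤
          ∫⁻ q in A ×ˢ A, ENNReal.ofReal (|q.1 - q.2| ^ a)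
            ∂((volume : Measure ℝ).prod volume) := by
  obtain ⟨c, hc, bound⟩ := double_integral_lower_bound_real_general (μ := volume (α := ℝ)) (C := 2)
    ha one_pos fun x r => by simp [Real.volume_eball]
  exact ⟨c, hc, fun A _ hA => by
    simpa [ofReal_coe_mul_toReal_rpow (add_nonneg ha zero_le_two) c hA, ofReal_abs_sub_rpow ha]
      using bound A⟩
end

section
/- For every b ∈ (0,1) there exists a constant λ_b > 0 such that for every measurable subset A ⊆ S^1, ∬_{A×A} |x − y|^{−b} dσ(x) dσ(y) ≥ λ_b·(∬_{A×S^1} |x − y|^{−b} dσ(x) dσ(y))^2. One may take λ_b = 1/(2^b·η(b)^2), where η(b) := ∫_{S^1} |x − y|^{−b} dσ(y) (which is independent of x ∈ S^1). -/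
open MeasureTheory
open scoped ENNReal

/-!
Distances on the circle are at most `2`, so the kernel is at least `2 ^ (-b)` off the diagonal and
`∬_{A×B} ≥ 2 ^ (-b) σ(A) σ(B)`. Rotation invariance gives `∬_{A×S¹} = η(b) σ(A)`, so eliminating
`σ(A)` and `σ(B)` bounds `∬_{A×B}` below by `2 ^ (-b) / η(b) ^ 2` times `∬_{A×S¹} ∬_{B×S¹}`.
Finiteness of `η(b)` for `b < 1` comes from Jordan's inequality `|1 - exp (θ i)| ≥ 2 |θ| / π`.
-/

section ProductIntegrals

variable {α β : Type*} [MeasurableSpace α] [MeasurableSpace β] {μ : Measure α} {ν : Measure β}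
  [SFinite ν]

lemma setLIntegral_prod_eq_mul_measure [SFinite μ] {K : α × β → ℝ≥0∞}
    (hK : AEMeasurable K (μ.prod ν)) {S : Set β} {η : ℝ≥0∞}
    (hη : ∀ᵐ x ∂μ, ∫⁻ y in S, K (x, y) ∂ν = η) (A : Set α) :
    ∫⁻ q in A ×ˢ S, K q ∂μ.prod ν = η * μ A := by
  have hK' : AEMeasurable K ((μ.restrict A).prod (ν.restrict S)) := by
    rw [Measure.prod_restrict]
    exact hK.restrict
  rw [← Measure.prod_restrict, lintegral_prod _ hK', ← setLIntegral_const]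
  exact lintegral_congr_ae (ae_restrict_of_ae hη)

lemma mul_measure_mul_measure_le_setLIntegral_prod {K : α × β → ℝ≥0∞} {c : ℝ≥0∞}
    (hc : ∀ᵐ q ∂μ.prod ν, c ≤ K q) (A : Set α) (B : Set β) :
    c * (μ A * ν B) ≤ ∫⁻ q in A ×ˢ B, K q ∂μ.prod ν := by
  rw [← Measure.prod_prod, ← setLIntegral_const]
  exact lintegral_mono_ae (ae_restrict_of_ae hc)

lemma mul_setLIntegral_prod_mul_setLIntegral_prod_le [SFinite μ] {K : α × α → ℝ≥0∞}
    (hK : AEMeasurable K (μ.prod μ)) {S : Set α} {η c : ℝ≥0∞}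
    (hη : ∀ᵐ x ∂μ, ∫⁻ y in S, K (x, y) ∂μ = η) (hc : ∀ᵐ q ∂μ.prod μ, c ≤ K q) (A B : Set α) :
    c * ((∫⁻ q in A ×ˢ S, K q ∂μ.prod μ) * ∫⁻ q in B ×ˢ S, K q ∂μ.prod μ) ≤
      η ^ 2 * ∫⁻ q in A ×ˢ B, K q ∂μ.prod μ :=
  calc
    _ = η ^ 2 * (c * (μ A * μ B)) := by
      rw [setLIntegral_prod_eq_mul_measure hK hη, setLIntegral_prod_eq_mul_measure hK hη]
      ring
    _ ≤ _ := by
      gcongr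
      exact mul_measure_mul_measure_le_setLIntegral_prod hc A B

end ProductIntegrals

instance fact_zero_lt_two_pi : Fact (0 < 2 * Real.pi) := ⟨Real.two_pi_pos⟩

/-- The parametrization of the unit circle of `ℂ` by angles modulo `2 * π`. Through it, arc length
inherits its properties from Haar measure on `AddCircle (2 * π)`. -/
noncomputable def circleParam (t : AddCircle (2 * Real.pi)) : ℂ := t.toCircle

lemma circleParam_coe (θ : ℝ) : circleParam θ = Complex.exp (θ * Complex.I) := by
  rw [circleParam, AddCircle.toCircle_apply_mk, div_self Real.two_pi_pos.ne', one_mul,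
    Circle.coe_exp]

lemma circleParam_add (s t : AddCircle (2 * Real.pi)) :
    circleParam (s + t) = circleParam s * circleParam t := by
  simp only [circleParam, AddCircle.toCircle_add, Circle.coe_mul]

lemma circleParam_injective : Function.Injective circleParam :=
  Subtype.val_injective.comp (AddCircle.injective_toCircle Real.two_pi_pos.ne')

lemma measurable_circleParam : Measurable circleParam :=
  (continuous_subtype_val.comp AddCircle.continuous_toCircle).measurable

lemma measurePreserving_circleParam : MeasurePreserving circleParam volume circleMeasure := by
  have hmk := AddCircle.measurePreserving_mk (2 * Real.pi) 0
  refine ⟨measurable_circleParam, ?_⟩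
  rw [← hmk.map_eq, Measure.map_map measurable_circleParam hmk.measurable, zero_add, circleMeasure,
    Measure.restrict_congr_set Ico_ae_eq_Ioc]
  exact congrArg (Measure.map · _) (funext circleParam_coe)

instance instIsFiniteMeasureCircleMeasure : IsFiniteMeasure circleMeasure := by
  unfold circleMeasure
  infer_instance

lemma circleMeasure_univ : circleMeasure Set.univ = ENNReal.ofReal (2 * Real.pi) := by
  rw [← measurePreserving_circleParam.measure_preimage MeasurableSet.univ.nullMeasurableSet,
    Set.preimage_univ, AddCircle.measure_univ]

instance instNullSingletonClassAddCircle (T : ℝ) [Fact (0 < T)] :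
    NullSingletonClass (volume : Measure (AddCircle T)) where
  measure_singleton x := by
    rw [← Metric.closedBall_zero, AddCircle.volume_closedBall]
    simp

instance instNullSingletonClassCircleMeasure : NullSingletonClass circleMeasure where
  measure_singleton x := by
    rw [← measurePreserving_circleParam.measure_preimage
      (measurableSet_singleton x).nullMeasurableSet]
    exact (Set.subsingleton_singleton.preimage circleParam_injective).measure_zero _

lemma ae_mem_unitCircle : ∀ᵐ y ∂circleMeasure, y ∈ unitCircle := by
  have hmeas : MeasurableSet unitCircle := Metric.isClosed_sphere.measurableSet
  rw [← measurePreserving_circleParam.map_eq]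
  exact (ae_map_iff measurable_circleParam.aemeasurable hmeas).2 (.of_forall fun t ↦ t.toCircle.2)

lemma measurePreserving_mul_left_circleMeasure {u : ℂ} (hu : u ∈ unitCircle) :
    MeasurePreserving (u * ·) circleMeasure circleMeasure := by
  have hu_arg : circleParam (u.arg : ℝ) = u := by
    simpa [circleParam_coe, mem_sphere_zero_iff_norm.1 hu] using Complex.norm_mul_exp_arg_mul_I u
  have hsemiconj : Function.Semiconj circleParam ((u.arg : AddCircle (2 * Real.pi)) + ·) (u * ·) :=
    fun t ↦ by rw [circleParam_add, hu_arg]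
  exact .of_semiconj measurePreserving_circleParam (measurePreserving_add_left volume _) hsemiconj
    (measurable_const_mul u)

/-- The Riesz potential `∫ |x - y| ^ (-b) dσ(y)` of arc length at the point `x`. It is `ℝ≥0∞`-valued
so that it makes sense before finiteness is known; its constant value on the circle is `η(b)`. -/
noncomputable def circlePotential (b : ℝ) (x : ℂ) : ℝ≥0∞ :=
  ∫⁻ y, ENNReal.ofReal (‖x - y‖ ^ (-b)) ∂circleMeasure

lemma circlePotential_eq_of_mem_unitCircle (b : ℝ) {x : ℂ} (hx : x ∈ unitCircle) :
    circlePotential b x = circlePotential b 1 := by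
  have hnorm (y : ℂ) : ‖x - x * y‖ = ‖1 - y‖ := by
    rw [← mul_one_sub, norm_mul, mem_sphere_zero_iff_norm.1 hx, one_mul]
  unfold circlePotential
  rw [← (measurePreserving_mul_left_circleMeasure hx).lintegral_comp (by fun_prop)]
  simp only [hnorm]

lemma two_div_pi_mul_abs_le_norm_one_sub_exp {θ : ℝ} (hθ : |θ| ≤ Real.pi) :
    2 / Real.pi * |θ| ≤ ‖1 - Complex.exp (θ * Complex.I)‖ := by
  have hhalf : |θ / 2| = |θ| / 2 := by rw [abs_div, abs_two]
  have hsin : 2 / Real.pi * |θ / 2| ≤ |Real.sin (θ / 2)| :=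
    Real.mul_abs_le_abs_sin (by linarith)
  rw [norm_sub_rev, mul_comm (θ : ℂ), Complex.norm_exp_I_mul_ofReal_sub_one, Real.norm_eq_abs,
    abs_mul, abs_two]
  linarith [hhalf ▸ hsin]

lemma integrableOn_norm_one_sub_exp_rpow_neg {b : ℝ} (hb₀ : 0 ≤ b) (hb₁ : b < 1) :
    IntegrableOn (fun θ : ℝ ↦ ‖1 - Complex.exp (θ * Complex.I)‖ ^ (-b))
      (Metric.ball 0 Real.pi) := by
  have hdecay : ∀ᵐ θ : ℝ ∂volume.restrict (Metric.ball 0 Real.pi),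
      ‖‖1 - Complex.exp (θ * Complex.I)‖ ^ (-b)‖ ≤ (2 / Real.pi) ^ (-b) * ‖θ‖ ^ (-b) := by
    filter_upwards [ae_restrict_mem measurableSet_ball, ae_restrict_of_ae (volume.ae_ne 0)]
      with θ hθ hθ₀
    have hπ : |θ| ≤ Real.pi := (mem_ball_zero_iff.1 hθ).le
    have hpos : 0 < 2 / Real.pi * |θ| := by positivity
    rw [Real.norm_of_nonneg (by positivity), Real.norm_eq_abs,
      ← Real.mul_rpow (by positivity) (abs_nonneg θ)]
    exact Real.rpow_le_rpow_of_nonpos hpos (two_div_pi_mul_abs_le_norm_one_sub_exp hπ)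
      (neg_nonpos.2 hb₀)
  exact integrableOn_ball_of_norm_le_rpow (by simp) (by simpa using hb₁) hdecay
    (by fun_prop : Measurable _).aestronglyMeasurable

lemma circlePotential_one_ne_top {b : ℝ} (hb₀ : 0 ≤ b) (hb₁ : b < 1) :
    circlePotential b 1 ≠ ∞ := by
  have hball : Metric.ball (0 : ℝ) Real.pi =ᵐ[volume]
      Set.Ioc (-Real.pi) (-Real.pi + 2 * Real.pi) := by
    rw [Real.ball_eq_Ioo, zero_sub, zero_add, neg_add_eq_sub, two_mul, add_sub_cancel_right]
    exact Ioo_ae_eq_Ioc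
  have hpotential : circlePotential b 1 = ∫⁻ θ in Metric.ball (0 : ℝ) Real.pi,
      ENNReal.ofReal (‖1 - Complex.exp (θ * Complex.I)‖ ^ (-b)) := by
    rw [circlePotential, ← measurePreserving_circleParam.lintegral_comp (by fun_prop),
      ← AddCircle.lintegral_preimage _ (-Real.pi), setLIntegral_congr hball]
    simp only [circleParam_coe]
  rw [hpotential]
  exact (integrableOn_norm_one_sub_exp_rpow_neg hb₀ hb₁).lintegral_lt_top.ne

lemma two_rpow_neg_le_norm_sub_rpow_neg {E : Type*} [NormedAddCommGroup E] {b : ℝ} (hb : 0 ≤ b)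
    {x y : E} (hx : ‖x‖ ≤ 1) (hy : ‖y‖ ≤ 1) (hxy : x ≠ y) :
    (2 : ℝ) ^ (-b) ≤ ‖x - y‖ ^ (-b) := by
  have hle : ‖x - y‖ ≤ 2 := by linarith [norm_sub_le x y]
  exact Real.rpow_le_rpow_of_nonpos (norm_pos_iff.2 (sub_ne_zero.2 hxy)) hle (by linarith)

lemma ae_two_rpow_neg_le_norm_sub_rpow_neg {b : ℝ} (hb : 0 ≤ b) {x : ℂ} (hx : x ∈ unitCircle) :
    ∀ᵐ y ∂circleMeasure,
      ENNReal.ofReal (2 ^ (-b)) ≤ ENNReal.ofReal (‖x - y‖ ^ (-b)) := by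
  filter_upwards [ae_mem_unitCircle, circleMeasure.ae_ne x] with y hy hyx
  exact ENNReal.ofReal_le_ofReal (two_rpow_neg_le_norm_sub_rpow_neg hb
    (mem_sphere_zero_iff_norm.1 hx).le (mem_sphere_zero_iff_norm.1 hy).le hyx.symm)

lemma ae_prod_two_rpow_neg_le_norm_sub_rpow_neg {b : ℝ} (hb : 0 ≤ b) :
    ∀ᵐ q ∂circleMeasure.prod circleMeasure,
      ENNReal.ofReal (2 ^ (-b)) ≤ ENNReal.ofReal (‖q.1 - q.2‖ ^ (-b)) := by
  refine (Measure.ae_prod_iff_ae_ae (measurableSet_le (by fun_prop) (by fun_prop))).2 ?_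
  filter_upwards [ae_mem_unitCircle] with x hx
  exact ae_two_rpow_neg_le_norm_sub_rpow_neg hb hx

lemma circlePotential_one_pos {b : ℝ} (hb : 0 ≤ b) : 0 < circlePotential b 1 :=
  calc
    0 < ENNReal.ofReal (2 ^ (-b)) * circleMeasure Set.univ := by
      rw [circleMeasure_univ, ← ENNReal.ofReal_mul (by positivity), ENNReal.ofReal_pos]
      positivity
    _ = ∫⁻ _, ENNReal.ofReal (2 ^ (-b)) ∂circleMeasure := (lintegral_const _).symm
    _ ≤ circlePotential b 1 :=
      lintegral_mono_ae (ae_two_rpow_neg_le_norm_sub_rpow_neg hb (by simp [unitCircle]))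

lemma ae_setLIntegral_unitCircle_eq_circlePotential_one (b : ℝ) :
    ∀ᵐ x ∂circleMeasure, ∫⁻ y in unitCircle, ENNReal.ofReal (‖x - y‖ ^ (-b)) ∂circleMeasure =
      circlePotential b 1 := by
  rw [Measure.restrict_eq_self_of_ae_mem ae_mem_unitCircle]
  filter_upwards [ae_mem_unitCircle] with x hx
  exact circlePotential_eq_of_mem_unitCircle b hx

theorem double_integral_negative_power_bound_general {b : ℝ} (hb₀ : 0 ≤ b) (hb₁ : b < 1) :
    ∃ ηb : ℝ, 0 < ηb ∧
      (∀ x ∈ unitCircle,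
        (∫⁻ y, ENNReal.ofReal (‖x - y‖ ^ (-b)) ∂circleMeasure) = ENNReal.ofReal ηb) ∧
      ∀ A B : Set ℂ,
        ENNReal.ofReal (1 / (2 ^ b * ηb ^ 2)) *
            ((∫⁻ q in A ×ˢ unitCircle, ENNReal.ofReal (‖q.1 - q.2‖ ^ (-b))
                ∂(circleMeasure.prod circleMeasure)) *
              ∫⁻ q in B ×ˢ unitCircle, ENNReal.ofReal (‖q.1 - q.2‖ ^ (-b))
                ∂(circleMeasure.prod circleMeasure)) ≤
          ∫⁻ q in A ×ˢ B, ENNReal.ofReal (‖q.1 - q.2‖ ^ (-b))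
            ∂(circleMeasure.prod circleMeasure) := by
  have hfin := circlePotential_one_ne_top hb₀ hb₁
  obtain ⟨η, hη, hηeq⟩ : ∃ η : ℝ, 0 < η ∧ circlePotential b 1 = ENNReal.ofReal η :=
    ⟨_, ENNReal.toReal_pos (circlePotential_one_pos hb₀).ne' hfin,
      (ENNReal.ofReal_toReal hfin).symm⟩
  refine ⟨η, hη, fun x hx ↦ (circlePotential_eq_of_mem_unitCircle b hx).trans hηeq, fun A B ↦ ?_⟩
  have hconst : ENNReal.ofReal (1 / (2 ^ b * η ^ 2)) =
      ENNReal.ofReal (2 ^ (-b)) / circlePotential b 1 ^ 2 := by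
    rw [hηeq, ← ENNReal.ofReal_pow hη.le, ← ENNReal.ofReal_div_of_pos (by positivity),
      Real.rpow_neg zero_le_two, one_div, mul_inv, div_eq_mul_inv]
  rw [hconst, ENNReal.mul_comm_div, mul_div_assoc']
  refine ENNReal.div_le_of_le_mul' ?_
  exact mul_setLIntegral_prod_mul_setLIntegral_prod_le (by fun_prop)
    (ae_setLIntegral_unitCircle_eq_circlePotential_one b)
    (ae_prod_two_rpow_neg_le_norm_sub_rpow_neg hb₀) A B

/-- For every `b ∈ (0,1)` there is `λ_b > 0`, namely `λ_b = 1/(2^b η(b)²)` where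
`η(b) = ∫_{S¹} |x - y|^{-b} dσ(y)` (independent of `x ∈ S¹`), such that
`∬_{A×A} |x-y|^{-b} ≥ λ_b (∬_{A×S¹} |x-y|^{-b})²` for every measurable `A ⊆ S¹`. -/
theorem double_integral_negative_power_bound (b : ℝ) (hb : b ∈ Set.Ioo (0 : ℝ) 1) :
    ∃ ηb : ℝ, 0 < ηb ∧
      (∀ x ∈ unitCircle,
        (∫⁻ y, ENNReal.ofReal (‖x - y‖ ^ (-b)) ∂circleMeasure) = ENNReal.ofReal ηb) ∧
      0 < 1 / (2 ^ b * ηb ^ 2) ∧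
      ∀ A : Set ℂ, A ⊆ unitCircle → MeasurableSet A →
        ENNReal.ofReal (1 / (2 ^ b * ηb ^ 2)) *
            (∫⁻ q in A ×ˢ unitCircle, ENNReal.ofReal (‖q.1 - q.2‖ ^ (-b))
              ∂(circleMeasure.prod circleMeasure)) ^ 2 ≤
          ∫⁻ q in A ×ˢ A, ENNReal.ofReal (‖q.1 - q.2‖ ^ (-b))
            ∂(circleMeasure.prod circleMeasure) := by
  obtain ⟨η, hη, hηeq, hbound⟩ := double_integral_negative_power_bound_general hb.1.le hb.2
  exact ⟨η, hη, hηeq, by positivity, fun A _ _ ↦ by simpa only [sq] using hbound A A⟩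
end
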